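/- Suppose that P is proper (every closed bounded subset of P is compact) and that Ω ⊆ P is open. Assume that ‖·‖_X is absolutely continuous and that ‖χ_E‖_X < ∞ for every measurable E ⊆ P with μ(E) < ∞. If locally Lipschitz functions are dense in N¹X(P), then locally Lipschitz functions on Ω are dense in N¹X(Ω): for every u ∈ N¹X(Ω) and ε > 0 there is a locally Lipschitz v : Ω → ℝ with ‖u − v‖_{N¹X(Ω)} ≤ ε. -/

import Mathlib

/-!
The function `u` is localized by a Lipschitz partition of unity `φ k` of `Ω`, each `φ k` vanishing
off a closed subset of `Ω`. By the Leibniz rule (`leibniz`) every `φ k * u`, extended by zero,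
belongs to `N¹X(P)`, so it is approximated by a locally Lipschitz `f k` up to an error chosen
after all Lipschitz constants are known. Multiplying by a second Lipschitz cutoff `ψ k`, equal to
`1` where `φ k ≠ 0`, gives a locally finite family on `Ω`, so `v = ∑ ψ k * f k` is locally Lipschitz
on `Ω`. Moreover `u - v = ∑ ψ k * (φ k * u - f k)` there, the Leibniz rule bounds each term, and the
Riesz–Fischer property bounds the sum (`newtOn_le_tsum`).

The Leibniz rule with the gradient `g + L * |w|` needs no absolute continuity along curves: the
product increment over `[a, b]` is compared at a time `t` where `|w|` does not exceed its mean,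
which turns the term `|w| * |φ(a) - φ(b)|` into at most `L * ∫ |w|`.

The cutoffs depend on the distance to the complement of `Ω` only. They need not have compact
support, since the approximants `f k` are locally Lipschitz on all of `P`.
-/

open MeasureTheory Filter Set Topology Metric ENNReal
open scoped NNReal

noncomputable section

/-- A (non-constant, rectifiable) curve in `P`, parametrized by arc length. -/
structure Curve (P : Type*) [PseudoMetricSpace P] where
  len : ℝ
  len_pos : 0 < len
  toFun : ℝ → P
  lip : LipschitzOnWith 1 toFun (Set.Icc 0 len)

variable {P : Type*}

/-- The curve integral `∫_γ ρ ds`. -/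
def curveLint [PseudoMetricSpace P] (γ : Curve P) (ρ : P → ℝ≥0∞) : ℝ≥0∞ :=
  ∫⁻ t in Set.Icc (0 : ℝ) γ.len, ρ (γ.toFun t)

/-- `g` is an upper gradient of `u`. -/
def IsUpperGradient [PseudoMetricSpace P] [MeasurableSpace P]
    (u : P → EReal) (g : P → ℝ≥0∞) : Prop :=
  Measurable g ∧
    ∀ γ : Curve P, (u (γ.toFun 0) - u (γ.toFun γ.len)).abs ≤ curveLint γ g

/-- A quasi-Banach function lattice over `(P, μ)` with continuous quasi-norm. -/
structure QBFL (P : Type*) [MeasurableSpace P] (μ : MeasureTheory.Measure P) where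
  nrm : (P → EReal) → ℝ≥0∞
  cc : ℝ≥0∞
  one_le_cc : 1 ≤ cc
  cc_lt_top : cc < ⊤
  nrm_eq_zero_iff : ∀ u : P → EReal, Measurable u → (nrm u = 0 ↔ u =ᵐ[μ] 0)
  nrm_smul : ∀ (a : ℝ) (u : P → EReal),
    nrm (fun x => (a : EReal) * u x) = ENNReal.ofReal |a| * nrm u
  nrm_triangle : ∀ u v : P → EReal,
    nrm (fun x => u x + v x) ≤ cc * (nrm u + nrm v)
  nrm_mono : ∀ u v : P → EReal, (∀ᵐ x ∂μ, (u x).abs ≤ (v x).abs) → nrm u ≤ nrm v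
  nrm_rieszFischer : ∀ f : ℕ → P → EReal, (∀ n, ∀ᵐ x ∂μ, 0 ≤ f n x) →
    nrm (fun x => ∑' n, f n x) ≤ ∑' n, cc ^ (n + 1) * nrm (f n)
  nrm_continuous : ∀ (f : ℕ → P → EReal) (u : P → EReal),
    Tendsto (fun n => nrm fun x => f n x - u x) atTop (𝓝 0) →
    Tendsto (fun n => nrm (f n)) atTop (𝓝 (nrm u))

variable [MetricSpace P] [MeasurableSpace P] {μ : MeasureTheory.Measure P}

/-- The quasi-norm applied to a `ℝ≥0∞`-valued function. -/
def QBFL.nrmE (X : QBFL P μ) (g : P → ℝ≥0∞) : ℝ≥0∞ :=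
  X.nrm fun x => (g x : EReal)

/-- The Newtonian quasi-seminorm `‖u‖_{N¹X}`. -/
def QBFL.newt (X : QBFL P μ) (u : P → EReal) : ℝ≥0∞ :=
  X.nrm u + ⨅ g ∈ {g : P → ℝ≥0∞ | IsUpperGradient u g}, X.nrmE g

/-- Membership in the Newtonian space `N¹X`. -/
def QBFL.memN1 (X : QBFL P μ) (u : P → EReal) : Prop :=
  Measurable u ∧ X.newt u < ⊤

/-- The Sobolev capacity `C_X`. -/
def QBFL.cap (X : QBFL P μ) (E : Set P) : ℝ≥0∞ :=
  ⨅ u ∈ {u : P → EReal | X.memN1 u ∧ ∀ x ∈ E, 1 ≤ u x}, X.newt u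


/-- `‖·‖_X` is absolutely continuous. -/
def QBFL.HasACNorm (X : QBFL P μ) : Prop :=
  ∀ u : P → EReal, Measurable u → X.nrm u < ⊤ →
    ∀ E : ℕ → Set P, (∀ n, MeasurableSet (E n)) → Antitone E → μ (⋂ n, E n) = 0 →
      Tendsto (fun n => X.nrm ((E n).indicator u)) atTop (𝓝 0)

/-- The quasi-norm of `X(Ω)`: `‖u‖_{X(Ω)} = ‖u χ_Ω‖_X`. -/
def QBFL.nrmOn (X : QBFL P μ) (Ω : Set P) (u : P → EReal) : ℝ≥0∞ :=
  X.nrm (Ω.indicator u)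

/-- `g` is an upper gradient of `u` in `Ω`: the upper gradient inequality holds along all
curves of `P` whose image lies in `Ω`. -/
def IsUpperGradientOn (Ω : Set P) (u : P → EReal) (g : P → ℝ≥0∞) : Prop :=
  Measurable g ∧
    ∀ γ : Curve P, (∀ t ∈ Set.Icc (0 : ℝ) γ.len, γ.toFun t ∈ Ω) →
      (u (γ.toFun 0) - u (γ.toFun γ.len)).abs ≤ curveLint γ g

/-- The Newtonian quasi-seminorm of `N¹X(Ω)`. -/
def QBFL.newtOn (X : QBFL P μ) (Ω : Set P) (u : P → EReal) : ℝ≥0∞ :=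
  X.nrmOn Ω u + ⨅ g ∈ {g : P → ℝ≥0∞ | IsUpperGradientOn Ω u g},
    X.nrmOn Ω (fun x => (g x : EReal))

/-! ### Leibniz rule for upper gradients -/

/-- The upper gradient inequality on a subarc, from the curve `t ↦ γ (a + t)` of length `b - a`. -/
lemma curve_sub_le {P : Type*} [MetricSpace P] [MeasurableSpace P]
    {S : Set P} {w : P → EReal} {g : P → ℝ≥0∞} (hg : IsUpperGradientOn S w g)
    (γ : Curve P) {a b : ℝ} (ha : 0 ≤ a) (hab : a < b) (hb : b ≤ γ.len)
    (hS : ∀ t ∈ Icc a b, γ.toFun t ∈ S) :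
    (w (γ.toFun a) - w (γ.toFun b)).abs ≤ ∫⁻ t in Icc a b, g (γ.toFun t) := by
  let γ' : Curve P :=
    { len := b - a
      len_pos := sub_pos.2 hab
      toFun := fun t => γ.toFun (a + t)
      lip := by
        intro s hs t ht
        have h := γ.lip (x := a + s) ⟨by linarith [hs.1], by linarith [hs.2]⟩
          (y := a + t) ⟨by linarith [ht.1], by linarith [ht.2]⟩
        simpa using h }
  have h := hg.2 γ' (fun t ht => hS _ ⟨by linarith [ht.1], by
    have : t ≤ b - a := ht.2
    linarith⟩)
  have e : curveLint γ' g = ∫⁻ t in Icc a b, g (γ.toFun t) := by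
    have := (measurePreserving_add_left (volume : Measure ℝ) a).setLIntegral_comp_preimage_emb
      (measurableEmbedding_addLeft a) (fun t => g (γ.toFun t)) (Icc a b)
    rw [← this]
    simp [curveLint, γ']
  rw [e] at h
  simpa [γ'] using h

/-- A difference with an infinite term has infinite absolute value; this includes `⊤ - ⊤` and
`⊥ - ⊥`, which are both `⊥`. -/
lemma EReal_abs_sub_top {x y : EReal} (h : x.abs = ⊤ ∨ y.abs = ⊤) : (x - y).abs = ⊤ := by
  induction x <;> induction y <;> simp_all [EReal.abs_def]

lemma EReal_exists_coe {x : EReal} (h : x.abs ≠ ⊤) : ∃ r : ℝ, x = r := by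
  induction x
  · simp at h
  · exact ⟨_, rfl⟩
  · simp at h

lemma measurable_EReal_abs : Measurable EReal.abs :=
  EReal.measurable_of_measurable_real
    (by simpa [EReal.abs_def] using (measurable_id.abs).ennreal_ofReal)

/-- The Leibniz inequality along a subarc contained in `S`. -/
lemma leibniz_sub {P : Type*} [MetricSpace P] [MeasurableSpace P] [BorelSpace P]
    {S : Set P} {w : P → EReal} {g : P → ℝ≥0∞} (hg : IsUpperGradientOn S w g)
    (hw : Measurable w) {φ : P → ℝ} {L : ℝ≥0} (hφ : LipschitzWith L φ)
    (hφ1 : ∀ x, 0 ≤ φ x ∧ φ x ≤ 1)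
    (γ : Curve P) {a b : ℝ} (ha : 0 ≤ a) (hab : a < b) (hb : b ≤ γ.len)
    (hS : ∀ t ∈ Icc a b, γ.toFun t ∈ S) :
    ((φ (γ.toFun a) : EReal) * w (γ.toFun a) - (φ (γ.toFun b) : EReal) * w (γ.toFun b)).abs
      ≤ ∫⁻ t in Icc a b, (g (γ.toFun t) + L * (w (γ.toFun t)).abs) := by
  have hsub : Icc a b ⊆ Icc 0 γ.len := Icc_subset_Icc ha hb
  have hγm : AEMeasurable γ.toFun (volume.restrict (Icc a b)) :=
    (γ.lip.continuousOn.mono hsub).aemeasurable measurableSet_Icc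
  have hwm : AEMeasurable (fun t => (w (γ.toFun t)).abs) (volume.restrict (Icc a b)) :=
    (measurable_EReal_abs.comp hw).comp_aemeasurable hγm
  have hgm : AEMeasurable (fun t => g (γ.toFun t)) (volume.restrict (Icc a b)) :=
    hg.1.comp_aemeasurable hγm
  rw [lintegral_add_left' hgm, lintegral_const_mul'' _ hwm]
  have hle : ∀ s ∈ Icc a b, ∀ t ∈ Icc a b, s < t →
      (w (γ.toFun s) - w (γ.toFun t)).abs ≤ ∫⁻ t in Icc s t, g (γ.toFun t) := fun s hs t ht hst =>
    curve_sub_le hg γ (ha.trans hs.1) hst (ht.2.trans hb)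
      (fun r hr => hS r ⟨hs.1.trans hr.1, hr.2.trans ht.2⟩)
  by_cases hfin : ∀ t ∈ Icc a b, (w (γ.toFun t)).abs ≠ ⊤
  swap
  · push Not at hfin
    obtain ⟨t, ht, htop⟩ := hfin
    -- a subcurve with endpoint `t` already has infinite `g`-length
    have : (⊤ : ℝ≥0∞) ≤ ∫⁻ t in Icc a b, g (γ.toFun t) := by
      rcases ht.1.eq_or_lt with h | h
      · have h1 := hle t ht b ⟨hab.le, le_rfl⟩ (h ▸ hab)
        rw [EReal_abs_sub_top (Or.inl htop)] at h1
        exact h1.trans (lintegral_mono_set (Icc_subset_Icc ht.1 le_rfl))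
      · have h1 := hle a ⟨le_rfl, hab.le⟩ t ht h
        rw [EReal_abs_sub_top (Or.inr htop)] at h1
        exact h1.trans (lintegral_mono_set (Icc_subset_Icc le_rfl ht.2))
    rw [top_le_iff.1 this]
    simp
  have hcoe : ∀ t ∈ Icc a b, ((w (γ.toFun t)).toReal : EReal) = w (γ.toFun t) := by
    intro t ht
    obtain ⟨r, hr⟩ := EReal_exists_coe (hfin t ht)
    rw [hr, EReal.toReal_coe]
  set W : ℝ → ℝ := fun t => (w (γ.toFun t)).toReal with hW
  set Φ : ℝ → ℝ := fun t => φ (γ.toFun t) with hΦ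
  have hΦ0 : ∀ t, 0 ≤ Φ t ∧ Φ t ≤ 1 := fun t => hφ1 _
  have hΦL : ∀ s ∈ Icc a b, ∀ t ∈ Icc a b, |Φ s - Φ t| ≤ L * |s - t| := by
    intro s hs t ht
    have h1 := hφ.dist_le_mul (γ.toFun s) (γ.toFun t)
    have h2 := γ.lip.dist_le_mul s (hsub hs) t (hsub ht)
    rw [Real.dist_eq] at h1 h2
    refine h1.trans (mul_le_mul_of_nonneg_left ?_ L.2)
    simpa using h2
  -- a time at which `|w|` is at most its mean over `[a, b]`
  obtain ⟨t, ht, hmean⟩ := exists_le_setLAverage (μ := volume) (s := Icc a b)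
    (f := fun t => (w (γ.toFun t)).abs) (by simp [hab]) (by simp) hwm
  have hmean' : ENNReal.ofReal (|W t| * (b - a)) ≤ ∫⁻ t in Icc a b, (w (γ.toFun t)).abs := by
    rw [setLAverage_eq, ENNReal.le_div_iff_mul_le (by simp [hab]) (by simp), Real.volume_Icc,
      ← hcoe t ht, EReal.abs_def, ← ENNReal.ofReal_mul (abs_nonneg _)] at hmean
    exact hmean
  have hle' : ∀ s ∈ Icc a b, ∀ t ∈ Icc a b, s ≤ t →
      ENNReal.ofReal |W s - W t| ≤ ∫⁻ t in Ioc s t, g (γ.toFun t) := by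
    intro s hs t ht hst
    rcases hst.eq_or_lt with rfl | hst
    · simp
    have h1 := hle s hs t ht hst
    rw [← hcoe s hs, ← hcoe t ht, ← EReal.coe_sub, EReal.abs_def] at h1
    rwa [setLIntegral_congr Ioc_ae_eq_Icc]
  have haI : a ∈ Icc a b := ⟨le_rfl, hab.le⟩
  have hbI : b ∈ Icc a b := ⟨hab.le, le_rfl⟩
  rw [← hcoe a haI, ← hcoe b hbI, ← EReal.coe_mul, ← EReal.coe_mul, ← EReal.coe_sub, EReal.abs_def]
  have key : |Φ a * W a - Φ b * W b| ≤ |W a - W t| + |W t - W b| + L * (|W t| * (b - a)) := by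
    have e : Φ a * W a - Φ b * W b = Φ a * (W a - W t) + Φ b * (W t - W b) + (Φ a - Φ b) * W t := by
      ring
    rw [e]
    refine (abs_add_le _ _).trans (add_le_add ((abs_add_le _ _).trans (add_le_add ?_ ?_)) ?_)
    · rw [abs_mul, abs_of_nonneg (hΦ0 a).1]
      exact mul_le_of_le_one_left (abs_nonneg _) (hΦ0 a).2
    · rw [abs_mul, abs_of_nonneg (hΦ0 b).1]
      exact mul_le_of_le_one_left (abs_nonneg _) (hΦ0 b).2
    · rw [abs_mul]
      have := hΦL a haI b hbI
      rw [abs_sub_comm a b, abs_of_pos (sub_pos.2 hab)] at this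
      nlinarith [abs_nonneg (W t)]
  refine (ENNReal.ofReal_le_ofReal key).trans ?_
  have hba : 0 ≤ |W t| * (b - a) := mul_nonneg (abs_nonneg _) (sub_nonneg.2 hab.le)
  rw [ENNReal.ofReal_add (by positivity) (mul_nonneg L.coe_nonneg hba),
    ENNReal.ofReal_add (by positivity) (by positivity), ENNReal.ofReal_mul L.coe_nonneg,
    ENNReal.ofReal_coe_nnreal]
  gcongr
  refine (add_le_add (hle' a haI t ht ht.1) (hle' t ht b hbI ht.2)).trans ?_
  rw [← lintegral_union measurableSet_Ioc (Ioc_disjoint_Ioc_of_le le_rfl),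
    Ioc_union_Ioc_eq_Ioc ht.1 ht.2]
  exact lintegral_mono_set Ioc_subset_Icc_self

/-- Leibniz rule for a Lipschitz cutoff `φ` supported in a closed set `S`: an upper gradient of `w`
along curves in `S` yields a global upper gradient of `φ * w`. A curve that meets `{φ = 0}` is cut
at its first and last zero of `φ`; the two outer arcs lie in `S` (or are degenerate) because `S` is
closed. -/
lemma leibniz {P : Type*} [MetricSpace P] [MeasurableSpace P] [BorelSpace P]
    {S : Set P} (hSc : IsClosed S) {w : P → EReal} {g : P → ℝ≥0∞} (hg : IsUpperGradientOn S w g)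
    (hw : Measurable w) {φ : P → ℝ} {L : ℝ≥0} (hφ : LipschitzWith L φ)
    (hφ1 : ∀ x, 0 ≤ φ x ∧ φ x ≤ 1) (hφS : ∀ x ∉ S, φ x = 0) :
    IsUpperGradient (fun x => (φ x : EReal) * w x)
      (S.indicator fun x => g x + L * (w x).abs) := by
  refine ⟨(hg.1.add ((measurable_EReal_abs.comp hw).const_mul _)).indicator hSc.measurableSet, ?_⟩
  intro γ
  set h := S.indicator fun x => g x + L * (w x).abs with hh
  have hsub : ∀ a b, 0 ≤ a → a < b → b ≤ γ.len → (∀ t ∈ Icc a b, γ.toFun t ∈ S) →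
      ((φ (γ.toFun a) : EReal) * w (γ.toFun a) - (φ (γ.toFun b) : EReal) * w (γ.toFun b)).abs
      ≤ ∫⁻ t in Ioc a b, h (γ.toFun t) := by
    intro a b ha hab hb hS
    refine (leibniz_sub hg hw hφ hφ1 γ ha hab hb hS).trans (le_of_eq ?_)
    rw [setLIntegral_congr Ioc_ae_eq_Icc]
    refine setLIntegral_congr_fun measurableSet_Icc (fun t ht => ?_)
    simp [hh, hS t ht]
  have hl := γ.len_pos
  have hlint : curveLint γ h = ∫⁻ t in Ioc 0 γ.len, h (γ.toFun t) := by
    rw [setLIntegral_congr Ioc_ae_eq_Icc]; rfl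
  rw [hlint]
  have hcont : ContinuousOn (fun t => φ (γ.toFun t)) (Icc 0 γ.len) :=
    hφ.continuous.comp_continuousOn γ.lip.continuousOn
  set T := Icc 0 γ.len ∩ (fun t => φ (γ.toFun t)) ⁻¹' {0} with hT
  have hTcl : IsClosed T := hcont.preimage_isClosed_of_isClosed isClosed_Icc isClosed_singleton
  have hTc : IsCompact T := isCompact_Icc.of_isClosed_subset hTcl inter_subset_left
  have hnot : ∀ t ∈ Icc 0 γ.len, t ∉ T → γ.toFun t ∈ S := by
    intro t ht htT
    by_contra hc
    exact htT ⟨ht, hφS _ hc⟩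
  rcases T.eq_empty_or_nonempty with hTe | hTn
  · exact hsub 0 γ.len le_rfl hl le_rfl (fun t ht => hnot t ht (by simp [hTe]))
  obtain ⟨t0, ht0, hmin⟩ := hTc.exists_isLeast hTn
  obtain ⟨t1, ht1, hmax⟩ := hTc.exists_isGreatest hTn
  have hpre : IsClosed (Icc 0 γ.len ∩ γ.toFun ⁻¹' S) :=
    γ.lip.continuousOn.preimage_isClosed_of_isClosed isClosed_Icc hSc
  have e0 : φ (γ.toFun t0) = 0 := ht0.2
  have e1 : φ (γ.toFun t1) = 0 := ht1.2
  have h0 : ((φ (γ.toFun 0) : EReal) * w (γ.toFun 0)).abs ≤ ∫⁻ t in Ioc 0 t0, h (γ.toFun t) := by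
    rcases ht0.1.1.eq_or_lt with hz | hz
    · rw [← hz] at e0
      simp [e0]
    have hIco : Ico 0 t0 ⊆ Icc 0 γ.len ∩ γ.toFun ⁻¹' S := fun t ht =>
      have hm : t ∈ Icc 0 γ.len := ⟨ht.1, ht.2.le.trans ht0.1.2⟩
      ⟨hm, hnot t hm (fun hc => (hmin hc).not_gt ht.2)⟩
    have hIcc := closure_minimal hIco hpre
    rw [closure_Ico hz.ne] at hIcc
    simpa [e0] using hsub 0 t0 le_rfl hz ht0.1.2 (fun t ht => (hIcc ht).2)
  have h1 : ((φ (γ.toFun γ.len) : EReal) * w (γ.toFun γ.len)).abs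
      ≤ ∫⁻ t in Ioc t1 γ.len, h (γ.toFun t) := by
    rcases ht1.1.2.eq_or_lt with hz | hz
    · rw [hz] at e1
      simp [e1]
    have hIoc : Ioc t1 γ.len ⊆ Icc 0 γ.len ∩ γ.toFun ⁻¹' S := fun t ht =>
      have hm : t ∈ Icc 0 γ.len := ⟨ht1.1.1.trans ht.1.le, ht.2⟩
      ⟨hm, hnot t hm (fun hc => (hmax hc).not_gt ht.1)⟩
    have hIcc := closure_minimal hIoc hpre
    rw [closure_Ioc hz.ne] at hIcc
    simpa [e1] using hsub t1 γ.len ht1.1.1 hz le_rfl (fun t ht => (hIcc ht).2)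
  have habs : ∀ x y : EReal, (x - y).abs ≤ x.abs + y.abs := by
    intro x y
    by_cases hx : x.abs = ⊤
    · simp [hx]
    by_cases hy : y.abs = ⊤
    · simp [hy]
    obtain ⟨r, rfl⟩ := EReal_exists_coe hx
    obtain ⟨s, rfl⟩ := EReal_exists_coe hy
    rw [← EReal.coe_sub, EReal.abs_def, EReal.abs_def, EReal.abs_def,
      ← ENNReal.ofReal_add (abs_nonneg _) (abs_nonneg _)]
    exact ENNReal.ofReal_le_ofReal (abs_sub _ _)
  refine (habs _ _).trans ((add_le_add h0 h1).trans ?_)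
  rw [← lintegral_union measurableSet_Ioc (Ioc_disjoint_Ioc_of_le (hmin ht1))]
  exact lintegral_mono_set (union_subset (Ioc_subset_Ioc le_rfl ht0.1.2)
    (Ioc_subset_Ioc ht1.1.1 le_rfl))

/-! ### Lipschitz cutoffs and locally Lipschitz functions -/

/-- An increasing sequence of Lipschitz cutoffs of `Ω`, each equal to `1` where the previous one is
nonzero, and all but finitely many equal to `1` on a neighbourhood of a given point of `Ω`. Since
`η 1 = 0`, the differences `η (k + 2) - η (k + 1)` sum to `1` on `Ω`. -/
lemma exists_cutoffs {P : Type*} [MetricSpace P] {Ω : Set P} (hΩ : IsOpen Ω) :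
    ∃ (η : ℕ → P → ℝ) (S : ℕ → Set P) (L : ℕ → ℝ≥0),
      (∀ n, LipschitzWith (L n) (η n)) ∧ (∀ n x, 0 ≤ η n x ∧ η n x ≤ 1) ∧
      (∀ x, η 1 x = 0) ∧ (∀ n x, η n x ≠ 0 → η (n + 1) x = 1) ∧
      (∀ n, IsClosed (S n)) ∧ (∀ n, S n ⊆ Ω) ∧ (∀ n, ∀ x ∉ S n, η n x = 0) ∧
      ∀ x ∈ Ω, ∃ N : ℕ, ∃ U ∈ 𝓝 x, ∀ n ≥ N, ∀ y ∈ U, η n y = 1 := by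
  set r : ℕ → ℝ := fun n => 1 / ((n : ℝ) + 1) with hr
  have hrpos : ∀ n, 0 < r n := fun n => by positivity
  have hranti : StrictAnti r := strictAnti_nat_of_succ_lt fun n => by
    simp only [hr]
    push_cast
    exact one_div_lt_one_div_of_lt (by positivity) (by linarith)
  have hδ : ∀ n, 0 < r n - r (n + 1) := fun n => sub_pos.2 (hranti n.lt_succ_self)
  -- the exhaustion of `Ω` by the points at distance at least `1 / (n + 1)` from the complement
  set K : ℕ → Set P := fun n => {x | ENNReal.ofReal (r n) ≤ infEDist x Ωᶜ} with hK
  have hKmono : Monotone K := monotone_nat_of_le_succ fun n x hx =>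
    (ENNReal.ofReal_le_ofReal (hranti n.lt_succ_self).le).trans hx
  have hKcl : ∀ n, IsClosed (K n) := fun n => isClosed_le continuous_const continuous_infEDist
  have hKΩ : ∀ n, K n ⊆ Ω := by
    intro n x hx
    by_contra hc
    have : infEDist x Ωᶜ = 0 := infEDist_zero_of_mem hc
    have hx' : ENNReal.ofReal (r n) ≤ infEDist x Ωᶜ := hx
    rw [this] at hx'
    simp [(hrpos n).not_ge] at hx'
  have hth : ∀ n, thickening (r n - r (n + 1)) (K n) ⊆ K (n + 1) := by
    intro n x hx
    obtain ⟨z, hz, hxz⟩ := (mem_thickening_iff_exists_edist_lt _ _).1 hx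
    have h1 : ENNReal.ofReal (r n) ≤ infEDist x Ωᶜ + edist z x :=
      le_trans hz infEDist_le_infEDist_add_edist
    rw [edist_comm] at h1
    have h2 : ENNReal.ofReal (r (n + 1)) + ENNReal.ofReal (r n - r (n + 1)) ≤
        infEDist x Ωᶜ + ENNReal.ofReal (r n - r (n + 1)) := by
      rw [← ENNReal.ofReal_add (hrpos _).le (hδ n).le, add_sub_cancel]
      exact h1.trans (by gcongr)
    exact (ENNReal.add_le_add_iff_right ENNReal.ofReal_ne_top).1 h2
  set c : ℕ → P → ℝ := fun n x => (thickenedIndicator (hδ n) (K n) x : ℝ) with hc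
  have hcK : ∀ n, ∀ x ∉ K (n + 1), c n x = 0 := fun n x hx => by
    simp only [hc]
    rw [thickenedIndicator_zero _ _ (fun h => hx (hth n h))]
    rfl
  have hc1 : ∀ n, ∀ x ∈ K n, c n x = 1 := fun n x hx => by
    simp only [hc]
    rw [thickenedIndicator_one _ _ hx]
    rfl
  refine ⟨fun n => match n with | 0 => 0 | 1 => 0 | (n + 2) => c n, K,
    fun n => match n with | 0 => 0 | 1 => 0 | (n + 2) => (r n - r (n + 1)).toNNReal⁻¹,
    ?_, ?_, ?_, ?_, hKcl, hKΩ, ?_, ?_⟩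
  · rintro (_ | _ | n)
    · exact LipschitzWith.const 0
    · exact LipschitzWith.const 0
    · exact lipschitzWith_thickenedIndicator (hδ n) (K n)
  · rintro (_ | _ | n) x
    · simp
    · simp
    · exact ⟨NNReal.coe_nonneg _, by
        exact_mod_cast thickenedIndicator_le_one (hδ n) (K n) x⟩
  · intro x; rfl
  · rintro (_ | _ | n) x h
    · simp at h
    · simp at h
    · exact hc1 _ _ (by_contra fun hx => h (hcK n x hx))
  · rintro (_ | _ | n) x hx
    · rfl
    · rfl
    · exact hcK n x (fun h => hx (hKmono (Nat.le_succ _) h))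
  · intro x hx
    have hpos : 0 < infEDist x Ωᶜ := by
      rw [pos_iff_ne_zero]
      exact fun h => (mem_iff_infEDist_zero_of_closed hΩ.isClosed_compl).2 h hx
    have hlim : Tendsto (fun n => ENNReal.ofReal (r n)) atTop (𝓝 0) := by
      have := ENNReal.tendsto_ofReal tendsto_one_div_add_atTop_nhds_zero_nat
      simpa [hr] using this
    obtain ⟨N, hN⟩ := (hlim.eventually_lt_const hpos).exists
    refine ⟨N + 2, {y | ENNReal.ofReal (r N) < infEDist y Ωᶜ},
      (isOpen_lt continuous_const continuous_infEDist).mem_nhds hN, ?_⟩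
    rintro (_ | _ | n) hn y hy
    · omega
    · omega
    · have hyN : y ∈ K N := le_of_lt (show ENNReal.ofReal (r N) < infEDist y Ωᶜ from hy)
      exact hc1 n y (hKmono (by omega : N ≤ n) hyN)

lemma locallyLipschitz_cutoff_mul {P : Type*} [MetricSpace P] {ψ f : P → ℝ} {L : ℝ≥0}
    (hψ : LipschitzWith L ψ) (hψ1 : ∀ x, |ψ x| ≤ 1) (hf : LocallyLipschitz f) :
    LocallyLipschitz fun x => ψ x * f x := by
  intro x
  obtain ⟨K, t, ht, hK⟩ := hf x
  have hb : ∀ᶠ y in 𝓝 x, |f y| < |f x| + 1 :=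
    (hf.continuous.abs.continuousAt).eventually_lt_const (by linarith)
  refine ⟨K + L * (‖f x‖₊ + 1), t ∩ {y | |f y| < |f x| + 1}, inter_mem ht hb, ?_⟩
  refine LipschitzOnWith.of_dist_le_mul fun y hy z hz => ?_
  have h1 := hK.dist_le_mul y hy.1 z hz.1
  have h2 := hψ.dist_le_mul y z
  have h3 : |f z| ≤ |f x| + 1 := le_of_lt hz.2
  rw [Real.dist_eq] at h1 h2 ⊢
  have e : ψ y * f y - ψ z * f z = ψ y * (f y - f z) + (ψ y - ψ z) * f z := by ring
  rw [e]
  refine (abs_add_le _ _).trans ?_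
  rw [abs_mul, abs_mul]
  push_cast
  rw [Real.norm_eq_abs, add_mul]
  refine add_le_add ?_ ?_
  · exact (mul_le_of_le_one_left (abs_nonneg _) (hψ1 y)).trans h1
  · calc |ψ y - ψ z| * |f z| ≤ (L * dist y z) * (|f x| + 1) := by gcongr
      _ = _ := by ring

lemma locallyLipschitz_sum {P : Type*} [MetricSpace P] {F : ℕ → P → ℝ}
    (hF : ∀ k, LocallyLipschitz (F k)) (n : ℕ) :
    LocallyLipschitz fun x => ∑ k ∈ Finset.range n, F k x := by
  induction n with
  | zero => simpa using LocallyLipschitz.const (0 : ℝ)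
  | succ n ih =>
    simp only [Finset.sum_range_succ]
    exact ih.add (hF n)

/-! ### Quasi-norm estimates -/

lemma EReal_abs_coe_ennreal (a : ℝ≥0∞) : (a : EReal).abs = a := by
  induction a with
  | top => rfl
  | coe a =>
    change ((a : ℝ) : EReal).abs = _
    rw [EReal.abs_def, abs_of_nonneg a.coe_nonneg, ENNReal.ofReal_coe_nnreal]

lemma EReal_coe_tsum (a : ℕ → ℝ≥0∞) : ∑' n, (a n : EReal) = ((∑' n, a n : ℝ≥0∞) : EReal) := by
  let F : ℝ≥0∞ →+ EReal :=
    { toFun := fun x => (x : EReal)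
      map_zero' := rfl
      map_add' := EReal.coe_ennreal_add }
  exact ((ENNReal.summable (f := a)).hasSum.map F continuous_coe_ennreal_ereal).tsum_eq

lemma nrm_mul_cutoff_le {P : Type*} [MeasurableSpace P] {μ : Measure P}
    (X : QBFL P μ) {φ : P → ℝ} (hφ1 : ∀ x, 0 ≤ φ x ∧ φ x ≤ 1)
    (w : P → EReal) : X.nrm (fun x => (φ x : EReal) * w x) ≤ X.nrm w := by
  refine X.nrm_mono _ _ (ae_of_all _ fun x => ?_)
  rw [EReal.abs_mul, EReal.abs_def, abs_of_nonneg (hφ1 x).1]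
  exact mul_le_of_le_one_left zero_le (ENNReal.ofReal_le_one.2 (hφ1 x).2)

lemma nrmE_leibniz_le {P : Type*} [MeasurableSpace P] {μ : Measure P}
    (X : QBFL P μ) (S : Set P) (w : P → EReal) (g : P → ℝ≥0∞) (L : ℝ≥0) :
    X.nrmE (S.indicator fun x => g x + L * (w x).abs)
      ≤ X.cc * (X.nrmOn S (fun x => (g x : EReal)) + L * X.nrmOn S w) := by
  have e : (fun x => ((S.indicator (fun x => g x + L * (w x).abs) x : ℝ≥0∞) : EReal)) =
      fun x => S.indicator (fun x => (g x : EReal)) x +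
        ((L : ℝ) : EReal) * ((S.indicator w x).abs : EReal) := by
    funext x
    by_cases hx : x ∈ S
    · simp only [indicator_of_mem hx, EReal.coe_ennreal_add, EReal.coe_ennreal_mul]
      rfl
    · simp [indicator_of_notMem hx]
  rw [QBFL.nrmE, e]
  refine (X.nrm_triangle _ _).trans ?_
  rw [X.nrm_smul, abs_of_nonneg L.coe_nonneg, ENNReal.ofReal_coe_nnreal]
  unfold QBFL.nrmOn
  gcongr
  exact X.nrm_mono _ _ (ae_of_all _ fun x => (EReal_abs_coe_ennreal _).le)

lemma nrm_le_tsum {P : Type*} [MeasurableSpace P] {μ : Measure P}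
    (X : QBFL P μ) (z : P → EReal) (f : ℕ → P → ℝ≥0∞)
    (h : ∀ x, (z x).abs ≤ ∑' n, f n x) :
    X.nrm z ≤ ∑' n, X.cc ^ (n + 1) * X.nrmE (f n) := by
  refine le_trans (X.nrm_mono _ (fun x => ∑' n, (f n x : EReal)) (ae_of_all _ fun x => ?_))
    (X.nrm_rieszFischer (fun n x => (f n x : EReal))
      (fun n => ae_of_all _ fun x => EReal.coe_ennreal_nonneg _))
  rw [EReal_coe_tsum, EReal_abs_coe_ennreal]
  exact h x

/-- Countable subadditivity of the Newtonian quasi-seminorm on `Ω`, for a function `z` that is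
pointwise on `Ω` an eventually stationary sum of the `w k`. At points where some `w k` is infinite
nothing is required of `z`. -/
lemma newtOn_le_tsum {P : Type*} [MetricSpace P] [MeasurableSpace P] [BorelSpace P]
    {μ : Measure P} (X : QBFL P μ) (Ω : Set P) (z : P → EReal) (w : ℕ → P → EReal)
    (h : ℕ → P → ℝ≥0∞) (hwh : ∀ k, IsUpperGradient (w k) (h k))
    (hz : ∀ x ∈ Ω, (∃ k, (w k x).abs = ⊤) ∨
      ∃ (a : ℕ → ℝ) (N : ℕ), (∀ k, w k x = a k) ∧
        ∀ n ≥ N, z x = ((∑ k ∈ Finset.range n, a k : ℝ) : EReal)) :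
    X.newtOn Ω z ≤ (∑' k, X.cc ^ (k + 1) * X.nrm (w k)) +
      ∑' k, X.cc ^ (k + 1) * X.nrmE (h k) := by
  have hsum : ∀ (a : ℕ → ℝ) (n : ℕ),
      ENNReal.ofReal |∑ k ∈ Finset.range n, a k| ≤ ∑' k, ((a k : ℝ) : EReal).abs := by
    intro a n
    refine (ENNReal.ofReal_le_ofReal (Finset.abs_sum_le_sum_abs _ _)).trans ?_
    rw [ENNReal.ofReal_sum_of_nonneg (fun _ _ => abs_nonneg _)]
    exact ENNReal.sum_le_tsum (f := fun k => ((a k : ℝ) : EReal).abs) (Finset.range n)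
  have htop : ∀ (b : ℕ → ℝ≥0∞) (y : ℝ≥0∞) (k : ℕ), b k = ⊤ → y ≤ ∑' k, b k := fun b y k hk =>
    le_top.trans (hk ▸ ENNReal.le_tsum k)
  refine add_le_add ?_ ?_
  · refine (nrm_le_tsum X _ (fun k x => (w k x).abs) fun x => ?_).trans
      (ENNReal.tsum_le_tsum fun k => ?_)
    · by_cases hx : x ∈ Ω
      · rw [indicator_of_mem hx]
        rcases hz x hx with ⟨k, hk⟩ | ⟨a, N, ha, hN⟩
        · exact htop _ _ k hk
        · rw [hN N le_rfl, EReal.abs_def]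
          simp only [ha]
          exact hsum a N
      · simp [indicator_of_notMem hx]
    · gcongr
      exact X.nrm_mono _ _ (ae_of_all _ fun x => (EReal_abs_coe_ennreal _).le)
  · have hug : IsUpperGradientOn Ω z (fun x => ∑' k, h k x) := by
      refine ⟨Measurable.tsum fun k => (hwh k).1, fun γ hγ => ?_⟩
      have hx := hγ 0 ⟨le_rfl, γ.len_pos.le⟩
      have hy := hγ γ.len ⟨γ.len_pos.le, le_rfl⟩
      have h1 : (z (γ.toFun 0) - z (γ.toFun γ.len)).abs ≤
          ∑' k, (w k (γ.toFun 0) - w k (γ.toFun γ.len)).abs := by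
        rcases hz _ hx with ⟨k, hk⟩ | ⟨a, N, ha, hN⟩
        · exact htop _ _ k (EReal_abs_sub_top (Or.inl hk))
        rcases hz _ hy with ⟨k, hk⟩ | ⟨b, M, hb, hM⟩
        · exact htop _ _ k (EReal_abs_sub_top (Or.inr hk))
        rw [hN (max N M) (le_max_left _ _), hM (max N M) (le_max_right _ _), ← EReal.coe_sub,
          ← Finset.sum_sub_distrib, EReal.abs_def]
        simp only [ha, hb, ← EReal.coe_sub]
        exact hsum (fun k => a k - b k) _
      refine h1.trans ((ENNReal.tsum_le_tsum fun k => (hwh k).2 γ).trans ?_)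
      have hγm : AEMeasurable γ.toFun (volume.restrict (Icc 0 γ.len)) :=
        γ.lip.continuousOn.aemeasurable measurableSet_Icc
      unfold curveLint
      exact (lintegral_tsum fun k => (hwh k).1.comp_aemeasurable hγm).ge
    refine (iInf₂_le _ hug).trans (nrm_le_tsum X _ h fun x => ?_)
    by_cases hx : x ∈ Ω
    · rw [indicator_of_mem hx, EReal_abs_coe_ennreal]
    · simp [indicator_of_notMem hx]

/-! ### Approximation on `Ω` -/

/-- The approximation of a single `u` by `v = ∑ ψ k * f k`. -/
theorem locLip_dense_on_open_aux
    {P : Type*} [MetricSpace P] [MeasurableSpace P] [BorelSpace P] {μ : Measure P}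
    (X : QBFL P μ)
    (hdens : ∀ u : P → EReal, X.memN1 u → ∀ ε : ℝ≥0∞, 0 < ε →
      ∃ f : P → ℝ, LocallyLipschitz f ∧ X.newt (fun x => u x - (f x : EReal)) < ε)
    {Ω : Set P} (hΩ : IsOpen Ω) (u : P → EReal) (hum : Measurable (Ω.indicator u))
    (hu : X.newtOn Ω u < ⊤) (ε : ℝ≥0∞) (hε : 0 < ε) :
    ∃ v : P → ℝ, LocallyLipschitzOn Ω v ∧
      X.newtOn Ω (fun x => u x - (v x : EReal)) ≤ ε := by
  obtain ⟨η, S, L, hηL, hη1, hη0, hηs, hScl, hSΩ, hηS, hηN⟩ := exists_cutoffs hΩ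
  -- the partition of unity; its partial sums telescope to `η (n + 1)`
  set φ : ℕ → P → ℝ := fun k x => η (k + 2) x - η (k + 1) x with hφ
  have hφL : ∀ k, LipschitzWith (L (k + 2) + L (k + 1)) (φ k) := fun k =>
    (hηL (k + 2)).sub (hηL (k + 1))
  have hφ1 : ∀ k x, 0 ≤ φ k x ∧ φ k x ≤ 1 := by
    intro k x
    have h1 := hη1 (k + 1) x
    have h2 := hη1 (k + 2) x
    refine ⟨?_, by simp only [hφ]; linarith⟩
    by_cases h : η (k + 1) x = 0
    · simp only [hφ, h]; linarith
    · simp only [hφ, hηs (k + 1) x h]; linarith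
  have hφS : ∀ k, ∀ x ∉ S (k + 2), φ k x = 0 := by
    intro k x hx
    have h2 := hηS (k + 2) x hx
    have h1 : η (k + 1) x = 0 := by
      by_contra h
      rw [hηs (k + 1) x h] at h2
      exact one_ne_zero h2
    simp [hφ, h1, h2]
  have hφsum : ∀ n x, ∑ k ∈ Finset.range n, φ k x = η (n + 1) x := by
    intro n x
    have := Finset.sum_range_sub (fun k => η (k + 1) x) n
    simpa [hφ, hη0] using this
  -- the second family of cutoffs, equal to `1` where `φ k` lives
  set ψ : ℕ → P → ℝ := fun k x => η (k + 3) x - η k x with hψ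
  set M : ℕ → ℝ≥0 := fun k => L (k + 3) + L k with hM
  have hψL : ∀ k, LipschitzWith (M k) (ψ k) := fun k => (hηL (k + 3)).sub (hηL k)
  have hψ1 : ∀ k x, 0 ≤ ψ k x ∧ ψ k x ≤ 1 := by
    intro k x
    have h1 := hη1 k x
    have h2 := hη1 (k + 3) x
    refine ⟨?_, by simp only [hψ]; linarith⟩
    by_cases h : η k x = 0
    · simp only [hψ, h]; linarith
    · have e1 := hηs k x h
      have e2 := hηs (k + 1) x (by rw [e1]; exact one_ne_zero)
      have e3 := hηs (k + 2) x (by rw [e2]; exact one_ne_zero)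
      simp only [hψ, e3]; linarith
  have hψφ : ∀ k x, φ k x ≠ 0 → ψ k x = 1 := by
    intro k x h
    have h0 : η k x = 0 := by
      by_contra hc
      have e1 := hηs k x hc
      have e2 := hηs (k + 1) x (by rw [e1]; exact one_ne_zero)
      exact h (by simp [hφ, e1, e2])
    have h2 : η (k + 2) x ≠ 0 := by
      intro hc
      have h1 : η (k + 1) x = 0 := by
        by_contra h'
        rw [hηs (k + 1) x h'] at hc
        exact one_ne_zero hc
      exact h (by simp [hφ, h1, hc])
    simp [hψ, h0, hηs (k + 2) x h2]
  -- the localized functions `φ k * u` are in the global Newtonian space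
  obtain ⟨hun, hug⟩ := ENNReal.add_lt_top.1 hu
  obtain ⟨g, hg⟩ := iInf_lt_iff.1 hug
  obtain ⟨hgu, hgn⟩ := iInf_lt_iff.1 hg
  have hgu : IsUpperGradientOn Ω u g := hgu
  set u' := Ω.indicator u with hu'
  have hmem : ∀ k, X.memN1 (fun x => (φ k x : EReal) * u' x) := by
    intro k
    have hgS : IsUpperGradientOn (S (k + 2)) u' g := by
      refine ⟨hgu.1, fun γ hγ => ?_⟩
      have h := hgu.2 γ (fun t ht => hSΩ _ (hγ t ht))
      rwa [hu', indicator_of_mem (hSΩ _ (hγ 0 ⟨le_rfl, γ.len_pos.le⟩)),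
        indicator_of_mem (hSΩ _ (hγ γ.len ⟨γ.len_pos.le, le_rfl⟩))]
    refine ⟨(hφL k).continuous.measurable.coe_real_ereal.mul hum, ENNReal.add_lt_top.2 ⟨?_, ?_⟩⟩
    · exact (nrm_mul_cutoff_le X (hφ1 k) u').trans_lt hun
    · refine (iInf₂_le _ (leibniz (hScl _) hgS hum (hφL k) (hφ1 k) (hφS k))).trans_lt
        ((nrmE_leibniz_le X _ _ _ _).trans_lt ?_)
      refine ENNReal.mul_lt_top X.cc_lt_top (ENNReal.add_lt_top.2
        ⟨?_, ENNReal.mul_lt_top ENNReal.coe_lt_top ?_⟩)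
      · refine (X.nrm_mono _ _ (ae_of_all _ fun x => ?_)).trans_lt hgn
        by_cases hx : x ∈ S (k + 2)
        · rw [indicator_of_mem hx, indicator_of_mem (hSΩ _ hx)]
        · simp [indicator_of_notMem hx]
      · refine (X.nrm_mono _ _ (ae_of_all _ fun x => ?_)).trans_lt hun
        by_cases hx : x ∈ S (k + 2)
        · rw [indicator_of_mem hx]
        · simp [indicator_of_notMem hx]
  -- `C k` absorbs the Riesz–Fischer weight `cc ^ (k + 1)` and the Leibniz constant `cc * (1 + M k)`
  obtain ⟨δ, hδpos, hδsum⟩ := ENNReal.exists_pos_sum_of_countable'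
    (ENNReal.half_pos hε.ne').ne' ℕ
  set C : ℕ → ℝ≥0∞ := fun k => X.cc ^ (k + 2) * (1 + M k) with hC
  have hcc0 : X.cc ≠ 0 := (zero_lt_one.trans_le X.one_le_cc).ne'
  have hC0 : ∀ k, C k ≠ 0 := fun k => mul_ne_zero (pow_ne_zero _ hcc0) (by simp)
  have hCt : ∀ k, C k ≠ ⊤ := fun k =>
    ENNReal.mul_ne_top (ENNReal.pow_ne_top X.cc_lt_top.ne) (by simp)
  choose f hfL hf using fun k => hdens _ (hmem k) (δ k / C k)
    (ENNReal.div_pos (hδpos k).ne' (hCt k))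
  set y : ℕ → P → EReal := fun k x => (φ k x : EReal) * u' x - (f k x : EReal) with hy
  have hym : ∀ k, Measurable (y k) := fun k =>
    (hmem k).1.sub (hfL k).continuous.measurable.coe_real_ereal
  have hG : ∀ k, ∃ G, IsUpperGradient (y k) G ∧ X.nrmE G < δ k / C k := by
    intro k
    obtain ⟨G, hG⟩ := iInf_lt_iff.1 (lt_of_le_of_lt le_add_self (hf k))
    obtain ⟨hG1, hG2⟩ := iInf_lt_iff.1 hG
    exact ⟨G, hG1, hG2⟩
  choose G hG hGn using hG
  have hyn : ∀ k, X.nrm (y k) < δ k / C k := fun k => lt_of_le_of_lt le_self_add (hf k)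
  set w : ℕ → P → EReal := fun k x => (ψ k x : EReal) * y k x with hw
  set h : ℕ → P → ℝ≥0∞ := fun k => univ.indicator fun x => G k x + M k * (y k x).abs with hh
  have hwh : ∀ k, IsUpperGradient (w k) (h k) := fun k =>
    leibniz isClosed_univ ⟨(hG k).1, fun γ _ => (hG k).2 γ⟩ (hym k) (hψL k) (hψ1 k)
      (fun x hx => absurd (mem_univ x) hx)
  have hwn : ∀ k, X.cc ^ (k + 1) * X.nrm (w k) ≤ δ k := by
    intro k
    calc X.cc ^ (k + 1) * X.nrm (w k) ≤ C k * (δ k / C k) := by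
          refine mul_le_mul' ?_ ((nrm_mul_cutoff_le X (hψ1 k) (y k)).trans (hyn k).le)
          exact (pow_le_pow_right₀ X.one_le_cc (Nat.le_succ _)).trans
            (le_mul_of_one_le_right zero_le le_self_add)
      _ = δ k := ENNReal.mul_div_cancel (hC0 k) (hCt k)
  have hhn : ∀ k, X.cc ^ (k + 1) * X.nrmE (h k) ≤ δ k := by
    intro k
    have h1 := nrmE_leibniz_le X univ (y k) (G k) (M k)
    simp only [QBFL.nrmOn, indicator_univ] at h1
    calc X.cc ^ (k + 1) * X.nrmE (h k)
        ≤ X.cc ^ (k + 1) * (X.cc * (δ k / C k + M k * (δ k / C k))) := by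
          refine mul_le_mul' le_rfl ?_
          simp only [hh, indicator_univ]
          refine h1.trans (mul_le_mul' le_rfl (add_le_add (hGn k).le
            (mul_le_mul' le_rfl (hyn k).le)))
      _ = C k * (δ k / C k) := by simp only [hC]; ring
      _ = δ k := ENNReal.mul_div_cancel (hC0 k) (hCt k)
  -- on a neighbourhood of every point of `Ω` the series defining `v` is a finite sum
  set v : P → ℝ := fun x => ∑' k, ψ k x * f k x with hv
  have hloc : ∀ x ∈ Ω, ∃ N : ℕ, ∃ U ∈ 𝓝 x, ∀ y ∈ U, ∀ n ≥ N,
      η (n + 1) y = 1 ∧ v y = ∑ k ∈ Finset.range n, ψ k y * f k y := by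
    intro x hx
    obtain ⟨N, U, hU, hN⟩ := hηN x hx
    refine ⟨N, U, hU, fun y hy n hn => ⟨hN _ (by omega) y hy, ?_⟩⟩
    refine tsum_eq_sum fun k hk => ?_
    have hk' : N ≤ k := hn.trans (by simpa using hk)
    simp [hψ, hN k hk' y hy, hN (k + 3) (by omega) y hy]
  refine ⟨v, ?_, ?_⟩
  · intro x hx
    obtain ⟨N, U, hU, hN⟩ := hloc x hx
    obtain ⟨K, t, ht, hK⟩ := locallyLipschitz_sum (F := fun k x => ψ k x * f k x)
      (fun k => locallyLipschitz_cutoff_mul (hψL k)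
        (fun x => abs_le.2 ⟨by linarith [(hψ1 k x).1], (hψ1 k x).2⟩) (hfL k)) N x
    refine ⟨K, t ∩ U, mem_nhdsWithin_of_mem_nhds (inter_mem ht hU), ?_⟩
    intro a ha b hb
    rw [(hN a ha.2 N le_rfl).2, (hN b hb.2 N le_rfl).2]
    exact hK ha.1 hb.1
  · refine (newtOn_le_tsum X Ω _ w h hwh ?_).trans ?_
    · intro x hx
      obtain ⟨N, U, hU, hN⟩ := hloc x hx
      have hN := hN x (mem_of_mem_nhds hU)
      have hux : u' x = u x := indicator_of_mem hx u
      by_cases hfin : (u x).abs = ⊤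
      · left
        have hsum : ∑ k ∈ Finset.range N, φ k x ≠ 0 := by
          rw [hφsum, (hN N le_rfl).1]
          exact one_ne_zero
        obtain ⟨k, -, hk⟩ := Finset.exists_ne_zero_of_sum_ne_zero hsum
        refine ⟨k, ?_⟩
        have hyk : (y k x).abs = ⊤ := by
          refine EReal_abs_sub_top (Or.inl ?_)
          rw [hux, EReal.abs_mul, hfin, EReal.abs_def]
          exact ENNReal.mul_top (by simpa using hk)
        simp only [hw, hψφ k x hk, EReal.coe_one, one_mul, hyk]
      · right
        obtain ⟨r, hr⟩ := EReal_exists_coe hfin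
        refine ⟨fun k => ψ k x * (φ k x * r - f k x), N, fun k => ?_, fun n hn => ?_⟩
        · simp only [hw, hy, hux, hr]
          push_cast
          rfl
        · have e : ∀ k, ψ k x * (φ k x * r - f k x) = φ k x * r - ψ k x * f k x := by
            intro k
            by_cases hk : φ k x = 0
            · simp [hk]
            · simp [hψφ k x hk]
          rw [hr, (hN n hn).2, Finset.sum_congr rfl (fun k _ => e k), Finset.sum_sub_distrib,
            ← Finset.sum_mul, hφsum, (hN n hn).1, one_mul, EReal.coe_sub]
    · calc _ ≤ (∑' k, δ k) + ∑' k, δ k :=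
            add_le_add (ENNReal.tsum_le_tsum hwn) (ENNReal.tsum_le_tsum hhn)
        _ ≤ ε / 2 + ε / 2 := add_le_add hδsum.le hδsum.le
        _ = ε := ENNReal.add_halves ε

/-- Let `P` be proper, `Ω ⊆ P` open, `‖·‖_X` absolutely continuous and
containing characteristic functions of sets of finite measure. If locally Lipschitz functions
are dense in `N¹X(P)`, then locally Lipschitz functions (on `Ω`) are dense in `N¹X(Ω)`. -/
theorem locLip_dense_on_open
    {P : Type*} [MetricSpace P] [MeasurableSpace P] [BorelSpace P] [ProperSpace P]
    (μ : MeasureTheory.Measure P) [SigmaFinite μ]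
    (hball : ∀ (x : P) (r : ℝ), 0 < r → 0 < μ (Metric.ball x r) ∧ μ (Metric.ball x r) < ⊤)
    (X : QBFL P μ) (hAC : X.HasACNorm)
    (hsimple : ∀ E : Set P, MeasurableSet E → μ E < ⊤ → X.nrm (E.indicator 1) < ⊤)
    (hdens : ∀ u : P → EReal, X.memN1 u → ∀ ε : ℝ≥0∞, 0 < ε →
      ∃ f : P → ℝ, LocallyLipschitz f ∧ X.newt (fun x => u x - (f x : EReal)) < ε)
    (Ω : Set P) (hΩ : IsOpen Ω) :
    ∀ u : P → EReal, Measurable (Ω.indicator u) → X.newtOn Ω u < ⊤ →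
      ∀ ε : ℝ≥0∞, 0 < ε →
        ∃ v : P → ℝ,
          (∀ x ∈ Ω, ∃ (K : ℝ≥0) (t : Set P), t ∈ nhdsWithin x Ω ∧ LipschitzOnWith K v t) ∧
          X.newtOn Ω (fun x => u x - (v x : EReal)) ≤ ε := by
  intro u hum hu ε hε
  exact locLip_dense_on_open_aux X hdens hΩ u hum hu ε hε

end
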